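/- Let C be a small category and F : Cᵒᵖ × C ⥤ Type a functor. Then the coend ∫^X F(X, X) is isomorphic to the colimit of the composite functor π' ⋙ F : tw(C)ᵒᵖ → Type, where tw(C) is the twisted arrow category of C (the category of elements of the hom functor Hom_C : Cᵒᵖ × C ⥤ Type) and π' : tw(C)ᵒᵖ → Cᵒᵖ × C sends an arrow m → n of C to the pair (n, m). -/

import Mathlib

/-!
An object of `tw(C)ᵒᵖ` is an arrow `m : a ⟶ b`, and a cocone under `π' ⋙ F` gives on it a map out
of `F(b, a)`. The arrow `m` receives in `tw(C)` the maps `(𝟙, m)` from `𝟙 a` and `(m, 𝟙)` from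
`𝟙 b`. Hence the leg at `m` is determined by the leg at `𝟙 a`, by precomposing with
`F(m, 𝟙) : F(b, a) ⟶ F(a, a)`; and comparing it with the leg at `𝟙 b` says that the legs at
identities satisfy the cowedge condition for `m`. Conversely, a cowedge extends to all arrows by
that formula, and naturality in a general map `(u, v)` of `tw(C)` is one instance of the cowedge
condition, for the arrow `u` (`CoendTw.mk_act`). So `Coend F` is the point of a colimit cocone
under `π' ⋙ F`.
-/

/- STATEMENT 15: For a small category C and F : Cᵒᵖ × C ⥤ Type, the coend ∫^X F(X,X)
   is isomorphic to the colimit of π' ⋙ F : tw(C)ᵒᵖ ⥤ Type, where tw(C) is the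
   twisted arrow category (the category of elements of the hom functor) and
   π' : tw(C)ᵒᵖ ⥤ Cᵒᵖ × C sends an arrow m : a → b of C to the pair (b, a)
   (codomain in the contravariant slot, domain in the covariant slot). -/

open CategoryTheory CategoryTheory.Limits Opposite

universe u

variable (C : Type u) [SmallCategory C]

/-- The twisted arrow category of `C`: the category of elements of the hom functor.
Its objects are morphisms of `C`; a morphism from `(m : a → b)` to `(n : c → d)` is a
pair `(u : c → a, v : b → d)` with `u ≫ m ≫ v = n`. -/
abbrev TwistedArrows : Type u :=
  (Functor.hom C).Elements

/-- The projection `π' : tw(C)ᵒᵖ ⥤ Cᵒᵖ × C` sending an arrow `m : a → b` of `C` to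
`(b, a)`. -/
def twProj : (TwistedArrows C)ᵒᵖ ⥤ Cᵒᵖ × C where
  obj e := (op e.unop.1.2, e.unop.1.1.unop)
  map f := ((f.unop.val.2).op, (f.unop.val.1).unop)

variable {C}

/-- The relation generating the coend of `F : Cᵒᵖ × C ⥤ Type`: for `r : X ⟶ Y` and
`z ∈ F(Y, X)`, identify `F(r, 𝟙_X)(z) ∈ F(X, X)` with `F(𝟙_Y, r)(z) ∈ F(Y, Y)`. -/
def CoendStep (F : Cᵒᵖ × C ⥤ Type u) :
    (Σ X : C, F.obj (op X, X)) → (Σ X : C, F.obj (op X, X)) → Prop :=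
  fun p q => ∃ (r : p.1 ⟶ q.1) (z : F.obj (op q.1, p.1)),
    F.map ((r.op : op q.1 ⟶ op p.1), 𝟙 p.1) z = p.2 ∧
    F.map ((𝟙 (op q.1) : op q.1 ⟶ op q.1), r) z = q.2

/-- The coend `∫^X F(X, X)` as the universal cowedge: the quotient of the disjoint
union of the `F(X, X)` by the coend relation. -/
def Coend (F : Cᵒᵖ × C ⥤ Type u) : Type u :=
  Quot (CoendStep F)

namespace CoendTw

/-- The action `F(f, g)` of a bifunctor on elements, contravariant in `f` and covariant in `g`. -/
def act (F : Cᵒᵖ × C ⥤ Type u) {X X' Y Y' : C} (f : X' ⟶ X) (g : Y ⟶ Y')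
    (z : F.obj (op X, Y)) : F.obj (op X', Y') :=
  F.map (X := (op X, Y)) (Y := (op X', Y')) (f.op, g) z

lemma act_act (F : Cᵒᵖ × C ⥤ Type u) {X X' X'' Y Y' Y'' : C} (f : X' ⟶ X) (g : Y ⟶ Y')
    (f' : X'' ⟶ X') (g' : Y' ⟶ Y'') (z : F.obj (op X, Y)) :
    act F f' g' (act F f g z) = act F (f' ≫ f) (g ≫ g') z :=
  (ConcreteCategory.congr_hom (F.map_comp (X := (op X, Y)) (Y := (op X', Y'))
    (Z := (op X'', Y'')) (f.op, g) (f'.op, g')) z).symm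

lemma act_id (F : Cᵒᵖ × C ⥤ Type u) {X Y : C} (z : F.obj (op X, Y)) :
    act F (𝟙 X) (𝟙 Y) z = z :=
  ConcreteCategory.congr_hom (F.map_id (op X, Y)) z

/-- The class in the coend of an element of `F(X, X)`. -/
def mk (F : Cᵒᵖ × C ⥤ Type u) (X : C) (x : F.obj (op X, X)) : Coend F :=
  Quot.mk _ ⟨X, x⟩

/-- The cowedge condition, stated for a morphism `u ≫ m` that factors through `u`; it is the
condition for `u` at the element `F(m, 𝟙)(z)`. -/
lemma mk_act (F : Cᵒᵖ × C ⥤ Type u) {a a' b : C} (u : a ⟶ a') (m : a' ⟶ b)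
    (z : F.obj (op b, a)) :
    mk F a (act F (u ≫ m) (𝟙 a) z) = mk F a' (act F m u z) := by
  refine Quot.sound ⟨u, act F m (𝟙 a) z, ?_, ?_⟩
  · exact (act_act F m (𝟙 a) u (𝟙 a) z).trans (by simp)
  · exact (act_act F m (𝟙 a) (𝟙 a') u z).trans (by simp)

/-- An arrow of `C` as an object of `tw(C)ᵒᵖ`. -/
def tw {a b : C} (m : a ⟶ b) : (TwistedArrows C)ᵒᵖ :=
  op ⟨(op a, b), m⟩

/-- The map `m ⟶ n` in `tw(C)ᵒᵖ` given by a factorization `m = u ≫ n ≫ v`. -/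
def twHom {a b c d : C} {m : a ⟶ b} {n : c ⟶ d} (u : a ⟶ c) (v : d ⟶ b)
    (h : u ≫ n ≫ v = m) : tw m ⟶ tw n :=
  Quiver.Hom.op (CategoryOfElements.homMk (F := Functor.hom C) ⟨(op c, d), n⟩ ⟨(op a, b), m⟩
    (u.op, v) h)

/-- The leg at `m : a ⟶ b` of a cocone under `π' ⋙ F`, as a function on `F(b, a)`. -/
def leg {F : Cᵒᵖ × C ⥤ Type u} (s : Cocone (twProj C ⋙ F)) {a b : C} (m : a ⟶ b)
    (z : F.obj (op b, a)) : s.pt :=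
  s.ι.app (tw m) z

lemma leg_act {F : Cᵒᵖ × C ⥤ Type u} (s : Cocone (twProj C ⋙ F)) {a b c d : C} {m : a ⟶ b}
    {n : c ⟶ d} (u : a ⟶ c) (v : d ⟶ b) (h : u ≫ n ≫ v = m) (z : F.obj (op b, a)) :
    leg s n (act F v u z) = leg s m z :=
  ConcreteCategory.congr_hom (s.w (twHom u v h)) z

/-- The cocone under `π' ⋙ F` with point the coend; its leg at `m : a ⟶ b` is
`z ↦ [F(m, 𝟙 a)(z)]`. -/
def cocone (F : Cᵒᵖ × C ⥤ Type u) : Cocone (twProj C ⋙ F) where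
  pt := Coend F
  ι :=
    { app := fun e => ↾fun z : F.obj (op e.unop.1.2, e.unop.1.1.unop) =>
        mk F e.unop.1.1.unop (act F e.unop.2 (𝟙 _) z)
      naturality := by
        rintro ⟨⟨⟨⟨a⟩, b⟩, m⟩⟩ ⟨⟨⟨⟨a'⟩, b'⟩, n⟩⟩ f
        obtain ⟨⟨⟨⟨u⟩, v⟩, h⟩⟩ := f
        change a ⟶ a' at u
        change b' ⟶ b at v
        change a ⟶ b at m
        change a' ⟶ b' at n
        replace h : u ≫ n ≫ v = m := h
        subst h
        ext z
        change F.obj (op b, a) at z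
        change mk F a' (act F n (𝟙 a') (act F v u z)) = mk F a (act F (u ≫ n ≫ v) (𝟙 a) z)
        rw [act_act, mk_act, Category.comp_id] }

/-- The map out of the coend induced by the legs of a cocone at the identities. -/
def desc {F : Cᵒᵖ × C ⥤ Type u} (s : Cocone (twProj C ⋙ F)) : Coend F → s.pt :=
  Quot.lift (fun p => leg s (𝟙 p.1) p.2) (by
    rintro ⟨X, x⟩ ⟨Y, y⟩ ⟨r, z, hx, hy⟩
    change X ⟶ Y at r
    change F.obj (op Y, X) at z
    change act F r (𝟙 X) z = x at hx
    change act F (𝟙 Y) r z = y at hy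
    subst hx hy
    -- Both sides are the leg at `r` applied to `z`.
    exact (leg_act s (m := r) (𝟙 X) r (by simp) z).trans
      (leg_act s (m := r) r (𝟙 Y) (by simp) z).symm)

/-- Uniqueness holds because every class `[x]` with `x ∈ F(X, X)` is the value at `x` of the leg at
`𝟙 X`. -/
def isColimit (F : Cᵒᵖ × C ⥤ Type u) : IsColimit (cocone F) where
  desc s := ↾(desc s)
  fac s := by
    rintro ⟨⟨⟨⟨a⟩, b⟩, m⟩⟩
    ext z
    change a ⟶ b at m
    exact leg_act s (𝟙 a) m (by simp) z
  uniq s f hf := by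
    ext p
    obtain ⟨X, x⟩ := p
    have h : f (mk F X (act F (𝟙 X) (𝟙 X) x)) = leg s (𝟙 X) x :=
      ConcreteCategory.congr_hom (hf (tw (𝟙 X))) x
    rw [act_id] at h
    exact h

end CoendTw

theorem stmt15 (F : Cᵒᵖ × C ⥤ Type u) :
    Nonempty (Coend F ≅ colimit (twProj C ⋙ F)) := by
  exact ⟨(CoendTw.isColimit F).coconePointUniqueUpToIso (colimit.isColimit _)⟩
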